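/- For every real y with -1 < y < 0, we have 1 + y*exp(y+1) + sqrt(1 + y*exp(y+1)) - exp(y+1) * ln(1 + sqrt(1 + y*exp(y+1))) > 0. -/

import Mathlib

/-!
Put `t = y + 1`, `s = √(1 + y e^t) > 0`, `L = ln (1 + s)` and `u = L / s`, so that `0 < u < 1`.
The claim is `e^t < s (1 + s) / L = (1 + s) / u = e^p`, where `p = L - ln u ≥ 0`.
The function `x ↦ (x - 1) e^x` is monotone on `[0, ∞)` and takes the value `s² - 1` at `t`,
so it is enough that `(p - 1) e^p > s² - 1`. Since `L = s u`, one has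
`s² - 1 = (L - u) (1 + s) / u = (L - u) e^p`, and the inequality reduces to `ln u < u - 1`.
-/

/-- Monotonicity of `x ↦ (x - 1) e^x` on `[0, ∞)`. -/
lemma sub_one_mul_exp_le {p t : ℝ} (hp : 0 ≤ p) (hpt : p ≤ t) :
    (p - 1) * Real.exp p ≤ (t - 1) * Real.exp t := by
  have h1 : p - t + 1 ≤ Real.exp (p - t) := Real.add_one_le_exp _
  have h2 : Real.exp (p - t) ≤ 1 := Real.exp_le_one_iff.mpr (by linarith)
  have h3 : Real.exp p = Real.exp (p - t) * Real.exp t := by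
    rw [← Real.exp_add]; congr 1; ring
  have h4 : (p - 1) * Real.exp (p - t) ≤ t - 1 := by nlinarith
  rw [h3, ← mul_assoc]
  exact mul_le_mul_of_nonneg_right h4 (Real.exp_pos t).le

theorem stmt12 (y : ℝ) (h1 : -1 < y) (h2 : y < 0) :
    1 + y * Real.exp (y+1) + Real.sqrt (1 + y * Real.exp (y+1))
      - Real.exp (y+1) * Real.log (1 + Real.sqrt (1 + y * Real.exp (y+1))) > 0 := by
  have hE : 0 < Real.exp (y+1) := Real.exp_pos _
  -- Strict positivity of the radicand is `e^(-t) > 1 - t` multiplied by `e^t`.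
  have hpos : 0 < 1 + y * Real.exp (y+1) := by
    have h3 : -(y+1) + 1 < Real.exp (-(y+1)) := Real.add_one_lt_exp (by linarith)
    have h4 : Real.exp (-(y+1)) * Real.exp (y+1) = 1 := by
      rw [← Real.exp_add]; simp
    nlinarith
  have hs : 0 < Real.sqrt (1 + y * Real.exp (y+1)) := Real.sqrt_pos.mpr hpos
  have hsq := Real.sq_sqrt hpos.le
  set s := Real.sqrt (1 + y * Real.exp (y+1)) with hs_def
  have hL : 0 < Real.log (1 + s) := Real.log_pos (by linarith)
  have hLs : Real.log (1 + s) < s := by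
    have := Real.log_lt_sub_one_of_pos (x := 1 + s) (by linarith) (by linarith)
    linarith
  have hexpL : Real.exp (Real.log (1 + s)) = 1 + s := Real.exp_log (by linarith)
  set L := Real.log (1 + s) with hL_def
  obtain ⟨u, hu⟩ : ∃ u, u = L / s := ⟨_, rfl⟩
  have hu0 : 0 < u := hu ▸ div_pos hL hs
  have hu1 : u < 1 := by rw [hu, div_lt_one hs]; exact hLs
  have hus : L = s * u := by rw [hu]; field_simp
  have hlog : Real.log u < u - 1 := Real.log_lt_sub_one_of_pos hu0 hu1.ne
  have hexp : Real.exp (L - Real.log u) * u = 1 + s := by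
    rw [Real.exp_sub, Real.exp_log hu0, hexpL]; field_simp
  have hP := Real.exp_pos (L - Real.log u)
  by_contra hcon
  have hcon' : s * (1 + s) ≤ Real.exp (y+1) * (s * u) := by
    rw [← hus]; nlinarith
  have hle : Real.exp (L - Real.log u) ≤ Real.exp (y+1) := by
    rw [← hexp] at hcon'
    have hsu : 0 < s * u := mul_pos hs hu0
    refine le_of_mul_le_mul_right ?_ hsu
    linarith
  have hmono := sub_one_mul_exp_le (by linarith) (Real.exp_le_exp.mp hle)
  have hgt : (L - u) * Real.exp (L - Real.log u)
      < (L - Real.log u - 1) * Real.exp (L - Real.log u) :=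
    mul_lt_mul_of_pos_right (by linarith) hP
  have heq : (L - u) * Real.exp (L - Real.log u) = s ^ 2 - 1 := by
    calc (L - u) * Real.exp (L - Real.log u)
        = (s - 1) * (Real.exp (L - Real.log u) * u) := by
          generalize Real.exp (L - Real.log u) = P
          rw [hus]; ring
      _ = s ^ 2 - 1 := by rw [hexp]; ring
  linarith
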